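/- arXiv:1903.08218 — 7 statements merged into one kernel-verified Lean document; each statement's English description precedes it below -/
import Mathlib

section
/- For every STRIPS planning model M over fluents F and labels A, every P ⊆ F, every state S : Set F and every plan π : List A: if π is executable from S in M, then π is executable from S \ P in the projection f_P(M), and the state trajectory of π from S \ P in f_P(M) equals the pointwise image under the map T ↦ T \ P of the state trajectory of π from S in M. -/
/-- A STRIPS planning model over fluents `F` and action labels `A`. -/
structure Strips (F : Type*) (A : Type*) where
  prec : A → Set F
  add : A → Set F
  del : A → Set F
  I : Set F
  G : Set F

/-- Result of applying action `a` in state `S`. -/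
def Strips.res {F A : Type*} (M : Strips F A) (a : A) (S : Set F) : Set F :=
  (S \ M.del a) ∪ M.add a

/-- The state trajectory `S₀, S₁, …, Sₙ` of a plan from a state. -/
def Strips.traj {F A : Type*} (M : Strips F A) : List A → Set F → List (Set F)
  | [], S => [S]
  | a :: π, S => S :: M.traj π (M.res a S)

/-- A plan is executable from `S` if each action's precondition holds when applied. -/
def Strips.exec {F A : Type*} (M : Strips F A) : List A → Set F → Prop
  | [], _ => True
  | a :: π, S => M.prec a ⊆ S ∧ M.exec π (M.res a S)

/-- The final state `Sₙ` of the trajectory of a plan from a state. -/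
def Strips.finalState {F A : Type*} (M : Strips F A) (π : List A) (S : Set F) : Set F :=
  π.foldl (fun T a => M.res a T) S

/-- The state `S_k` of the trajectory of a plan from a state. -/
def Strips.stateAt {F A : Type*} (M : Strips F A) (π : List A) (S : Set F) (k : ℕ) : Set F :=
  M.finalState (π.take k) S

/-- A plan is valid if it is executable from the initial state and achieves the goal. -/
def Strips.Valid {F A : Type*} (M : Strips F A) (π : List A) : Prop :=
  M.exec π M.I ∧ M.G ⊆ M.finalState π M.I

/-- The set `Π_M` of valid plans of `M`. -/
def Strips.Plans {F A : Type*} (M : Strips F A) : Set (List A) :=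
  {π | M.Valid π}

/-- The projection `f_P(M)` of a model, projecting out the fluents in `P`. -/
def Strips.proj {F A : Type*} (M : Strips F A) (P : Set F) : Strips F A where
  prec a := M.prec a \ P
  add a := M.add a \ P
  del a := M.del a \ P
  I := M.I \ P
  G := M.G \ P

theorem Strips.proj_res {F A : Type*} (M : Strips F A) (P : Set F) (a : A) (S : Set F) :
    (M.proj P).res a (S \ P) = M.res a S \ P := by
  ext x
  simp only [Strips.res, Strips.proj, Set.mem_union, Set.mem_diff]
  tauto

theorem stmt1 {F A : Type*} (M : Strips F A) (P : Set F) (S : Set F) (π : List A)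
    (h : M.exec π S) :
    (M.proj P).exec π (S \ P) ∧
    (M.proj P).traj π (S \ P) = (M.traj π S).map (fun T => T \ P) := by
  induction π generalizing S with
  | nil => exact ⟨trivial, rfl⟩
  | cons a π ih =>
    obtain ⟨h1, h2⟩ := h
    obtain ⟨e, t⟩ := ih _ h2
    refine ⟨⟨Set.diff_subset_diff_left h1, ?_⟩, ?_⟩
    · rw [Strips.proj_res]; exact e
    · simp only [Strips.traj, List.map_cons, Strips.proj_res, t]
end

section
/- For every STRIPS planning model M over fluents F and labels A and every P ⊆ F: if the projected model f_P(M) is unsolvable (Π_{f_P(M)} = ∅), then M is unsolvable (Π_M = ∅). -/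
theorem Strips.proj_finalState {F A : Type*} (M : Strips F A) (P : Set F) (π : List A) :
    ∀ S : Set F, (M.proj P).finalState π (S \ P) = M.finalState π S \ P := by
  induction π with
  | nil => intro S; rfl
  | cons a π ih =>
    intro S
    have h := ih (M.res a S)
    rw [← Strips.proj_res] at h
    exact h

theorem Strips.proj_exec {F A : Type*} (M : Strips F A) (P : Set F) (π : List A) :
    ∀ S : Set F, M.exec π S → (M.proj P).exec π (S \ P) := by
  induction π with
  | nil => intro S _; trivial
  | cons a π ih =>
    intro S h
    refine ⟨Set.diff_subset_diff_left h.1, ?_⟩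
    rw [Strips.proj_res]
    exact ih _ h.2

theorem stmt5 {F A : Type*} (M : Strips F A) (P : Set F)
    (h : (M.proj P).Plans = ∅) : M.Plans = ∅ := by
  refine Set.eq_empty_iff_forall_notMem.mpr fun π hπ => ?_
  refine Set.eq_empty_iff_forall_notMem.mp h π ⟨M.proj_exec P π _ hπ.1, ?_⟩
  change M.G \ P ⊆ (M.proj P).finalState π (M.I \ P)
  rw [Strips.proj_finalState]
  exact Set.diff_subset_diff_left hπ.2
end

section
/- (Proposition 2: explanations transfer from abstract to concrete models.) Let M be a STRIPS planning model over fluents F, let P₁ ⊆ P₂ ⊆ F (so that f_{P₁}(M) ⊑ f_{P₂}(M)), and let ε ⊆ F be a set of explanatory fluents. If the concretization of the more abstract model by ε is unsolvable, i.e. Π_{f_{P₂ \ ε}(M)} = ∅, then the concretization of the more concrete model by ε is also unsolvable, i.e. Π_{f_{P₁ \ ε}(M)} = ∅. -/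
theorem proj_mono_aux {F A : Type*} (M : Strips F A) (Q R : Set F) (h : Q ⊆ R) (π : List A) :
    ∀ S T : Set F, S \ R ⊆ T → (M.proj Q).exec π S →
      (M.proj R).exec π T ∧
        (M.proj Q).finalState π S \ R ⊆ (M.proj R).finalState π T := by
  induction π with
  | nil => intro S T hST _; exact ⟨trivial, hST⟩
  | cons a π ih =>
    intro S T hST hex
    obtain ⟨hp, hex⟩ := hex
    have hres : (M.proj Q).res a S \ R ⊆ (M.proj R).res a T := by
      rintro x ⟨hx, hxR⟩
      have hxQ : x ∉ Q := fun hq => hxR (h hq)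
      rcases hx with ⟨hxS, hxd⟩ | hxa
      · exact Or.inl ⟨hST ⟨hxS, hxR⟩, fun hd => hxd ⟨hd.1, hxQ⟩⟩
      · exact Or.inr ⟨hxa.1, hxR⟩
    have key := ih _ _ hres hex
    exact ⟨⟨fun x hx => hST ⟨hp ⟨hx.1, fun hq => hx.2 (h hq)⟩, hx.2⟩, key.1⟩, key.2⟩

theorem stmt6 {F A : Type*} (M : Strips F A) (P₁ P₂ : Set F) (h : P₁ ⊆ P₂)
    (ε : Set F) (habs : (M.proj (P₂ \ ε)).Plans = ∅) :
    (M.proj (P₁ \ ε)).Plans = ∅ := by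
  have hQR : P₁ \ ε ⊆ P₂ \ ε := Set.diff_subset_diff_left h
  rw [Set.eq_empty_iff_forall_notMem] at habs ⊢
  rintro π ⟨hex, hG⟩
  have key := proj_mono_aux M _ _ hQR π (M.proj (P₁ \ ε)).I (M.proj (P₂ \ ε)).I
    (fun x hx => ⟨hx.1.1, hx.2⟩) hex
  exact habs π ⟨key.1, fun x hx => key.2 ⟨hG ⟨hx.1, fun hq => hx.2 (hQR hq)⟩, hx.2⟩⟩
end

section
/- (Proposition 3, landmark preservation.) For every STRIPS planning model M over fluents F, every P ⊆ F and every predicate φ : Set F → Prop: if φ is a landmark of the projection f_P(M), then the lifted predicate S ↦ φ(S \ P) is a landmark of M. -/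
/-- `φ` is a (state) landmark of `M`: every valid plan passes through a state satisfying `φ`. -/
def Strips.Landmark {F A : Type*} (M : Strips F A) (φ : Set F → Prop) : Prop :=
  ∀ π ∈ M.Plans, ∃ S ∈ M.traj π M.I, φ S

theorem Strips.proj_traj {F A : Type*} (M : Strips F A) (P : Set F) (π : List A) :
    ∀ S : Set F, (M.proj P).traj π (S \ P) = (M.traj π S).map (fun T => T \ P) := by
  induction π with
  | nil => intro S; rfl
  | cons a π ih => intro S; simp only [Strips.traj, Strips.proj_res, ih, List.map_cons]

theorem stmt7 {F A : Type*} (M : Strips F A) (P : Set F) (φ : Set F → Prop)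
    (h : (M.proj P).Landmark φ) :
    M.Landmark (fun S => φ (S \ P)) := by
  rintro π ⟨h1, h2⟩
  obtain ⟨T, hT, hφ⟩ := h π ⟨M.proj_exec P π _ h1, by
    have h3 := M.proj_finalState P π M.I
    exact (Set.diff_subset_diff_left h2).trans h3.symm.subset⟩
  have hT' : T ∈ (M.traj π M.I).map (fun T => T \ P) := by
    rw [← Strips.proj_traj]
    exact hT
  obtain ⟨S, hS, rfl⟩ := List.mem_map.1 hT'
  exact ⟨S, hS, hφ⟩
end

section
/- (Preservation of greedy necessary landmark orderings under concretization.) Let M be a STRIPS planning model over fluents F, P ⊆ F, and φ, φ' : Set F → Prop. Say φ ≺_gnec φ' holds in a model N if for every valid plan π ∈ Π_N with state trajectory S₀, …, Sₙ from the initial state, whenever j is the least index with φ'(S_j) and j > 0, then φ holds at S_{j-1}. If φ ≺_gnec φ' holds in the projection f_P(M), then the lifted predicates S ↦ φ(S \ P) and S ↦ φ'(S \ P) satisfy the greedy necessary ordering in M. -/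
/-- Greedy necessary landmark ordering `φ ≺_gnec φ'` in model `N`. -/
def GnecOrd {F A : Type*} (N : Strips F A) (φ φ' : Set F → Prop) : Prop :=
  ∀ π ∈ N.Plans, ∀ j, 0 < j → j ≤ π.length →
    φ' (N.stateAt π N.I j) → (∀ k < j, ¬ φ' (N.stateAt π N.I k)) →
      φ (N.stateAt π N.I (j - 1))

theorem stmt10 {F A : Type*} (M : Strips F A) (P : Set F) (φ φ' : Set F → Prop)
    (h : GnecOrd (M.proj P) φ φ') :
    GnecOrd M (fun S => φ (S \ P)) (fun S => φ' (S \ P)) := by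
  intro π hπ j hj hjl hφ hk
  have key : ∀ k, (M.proj P).stateAt π (M.proj P).I k = M.stateAt π M.I k \ P :=
    fun k => Strips.proj_finalState M P (π.take k) M.I
  have hv : π ∈ (M.proj P).Plans := by
    refine ⟨Strips.proj_exec M P π M.I hπ.1, ?_⟩
    have e : (M.proj P).finalState π (M.proj P).I = M.finalState π M.I \ P :=
      Strips.proj_finalState M P π M.I
    rw [e]
    exact Set.diff_subset_diff_left hπ.2
  have := h π hv j hj hjl
  simp only [key] at this
  exact this hφ hk
end

section
/- (Unsolvability of constrained problems transfers to more concrete models.) Let M be a STRIPS planning model over fluents F and labels A, let P ⊆ F, and let L be any set of plans (a set of lists over A, representing a plan constraint). Then Π_M ∩ L ⊆ Π_{f_P(M)} ∩ L; in particular, if the constrained abstract problem has no valid plan (Π_{f_P(M)} ∩ L = ∅), then the constrained concrete problem has no valid plan (Π_M ∩ L = ∅). -/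
theorem stmt14 {F A : Type*} (M : Strips F A) (P : Set F) (L : Set (List A)) :
    M.Plans ∩ L ⊆ (M.proj P).Plans ∩ L ∧
    ((M.proj P).Plans ∩ L = ∅ → M.Plans ∩ L = ∅) := by
  have key : M.Plans ∩ L ⊆ (M.proj P).Plans ∩ L := by
    rintro π ⟨⟨h1, h2⟩, hL⟩
    refine ⟨⟨M.proj_exec P π _ h1, ?_⟩, hL⟩
    have h := M.proj_finalState P π M.I
    change M.G \ P ⊆ (M.proj P).finalState π (M.I \ P)
    rw [h]
    exact Set.diff_subset_diff_left h2
  exact ⟨key, fun h => Set.subset_eq_empty key h⟩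
end

section
/- (Correctness of the constrained-model compilation σ(M).) Let M be a STRIPS planning model over fluents F and labels A, and let d be a deterministic finite automaton over alphabet A with finite state type Q, accepting the language L(d). Then there exist a type F', a type A', a STRIPS planning model M' over fluents F' and labels A', and a map h : A' → Option A such that the image of the valid plans of M' under the map π ↦ π.filterMap h is exactly Π_M ∩ L(d); that is, a word over A is a valid plan of M satisfying the constraint given by d if and only if it arises from some valid plan of M' by erasing the auxiliary labels via h. -/
/-- The compiled model: fluents of `M`, plus the current automaton state (`some q`), plus a
finished flag (`none`). -/
def compiled {F A Q : Type} (M : Strips F A) (d : DFA A Q) :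
    Strips (F ⊕ Option Q) ((A × Q) ⊕ {q : Q // q ∈ d.accept}) where
  prec := Sum.elim (fun p => Sum.elim (M.prec p.1) (fun o => o = some p.2))
    (fun q => Sum.elim (fun _ => False) (fun o => o = some q.1))
  add := Sum.elim (fun p => Sum.elim (M.add p.1) (fun o => o = some (d.step p.2 p.1)))
    (fun _ => Sum.elim (fun _ => False) (fun o => o = none))
  del := Sum.elim (fun p => Sum.elim (M.del p.1) (fun o => o = some p.2))
    (fun q => Sum.elim (fun _ => False) (fun o => o = some q.1))
  I := Sum.elim M.I (fun o => o = some d.start)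
  G := Sum.elim M.G (fun o => o = none)

/-- Encoding of a state of `M` together with a control value. -/
def enc {F Q : Type} (S : Set F) (c : Option Q) : Set (F ⊕ Option Q) :=
  Sum.elim S (fun o => o = c)

theorem enc_subset {F Q : Type} (S T : Set F) (c e : Option Q) :
    enc S c ⊆ enc T e ↔ S ⊆ T ∧ c = e := by
  constructor
  · intro h
    exact ⟨fun x hx => h (a := Sum.inl x) hx, h (a := Sum.inr c) rfl⟩
  · rintro ⟨h, rfl⟩ (x | o) hx
    · exact h hx
    · exact hx

theorem prec_inl {F A Q : Type} (M : Strips F A) (d : DFA A Q) (a : A) (q : Q) :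
    (compiled M d).prec (Sum.inl (a, q)) = enc (M.prec a) (some q) := rfl

theorem prec_inr {F A Q : Type} (M : Strips F A) (d : DFA A Q) (q : {q : Q // q ∈ d.accept}) :
    (compiled M d).prec (Sum.inr q) = enc ∅ (some q.1) := rfl

theorem res_inl {F A Q : Type} (M : Strips F A) (d : DFA A Q) (a : A) (q : Q) (S : Set F) :
    (compiled M d).res (Sum.inl (a, q)) (enc S (some q)) =
      enc (M.res a S) (some (d.step q a)) := by
  ext (x | o)
  · exact Iff.rfl
  · change (o = some q ∧ ¬ o = some q) ∨ o = some (d.step q a) ↔ o = some (d.step q a)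
    tauto

theorem res_inr {F A Q : Type} (M : Strips F A) (d : DFA A Q) (q : {q : Q // q ∈ d.accept})
    (S : Set F) :
    (compiled M d).res (Sum.inr q) (enc S (some q.1)) = enc S none := by
  ext (x | o)
  · change (S x ∧ ¬ False) ∨ False ↔ S x
    tauto
  · change (o = some q.1 ∧ ¬ o = some q.1) ∨ o = none ↔ o = none
    tauto

/-- Erasing the auxiliary labels. -/
def erase {A Q : Type} (P : Q → Prop) : (A × Q) ⊕ {q : Q // P q} → Option A :=
  Sum.elim (fun p => some p.1) (fun _ => none)

theorem backward {F A Q : Type} (M : Strips F A) (d : DFA A Q)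
    (π : List ((A × Q) ⊕ {q : Q // q ∈ d.accept})) : ∀ (S : Set F) (q : Q),
    (compiled M d).exec π (enc S (some q)) →
    enc M.G none ⊆ (compiled M d).finalState π (enc S (some q)) →
    M.exec (π.filterMap (erase _)) S ∧ M.G ⊆ M.finalState (π.filterMap (erase _)) S ∧
      d.evalFrom q (π.filterMap (erase _)) ∈ d.accept := by
  induction π with
  | nil =>
    intro S q _ h
    have := ((enc_subset _ _ _ _).1 h).2
    simp at this
  | cons b π ih =>
    intro S q he hg
    obtain ⟨hp, he⟩ := he
    change enc M.G none ⊆ (compiled M d).finalState π ((compiled M d).res b _) at hg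
    rcases b with ⟨a, q'⟩ | q'
    · rw [prec_inl, enc_subset] at hp
      obtain ⟨hp, hq⟩ := hp
      obtain rfl := Option.some.inj hq
      rw [res_inl] at he hg
      obtain ⟨h1, h2, h3⟩ := ih _ _ he hg
      exact ⟨⟨hp, h1⟩, h2, h3⟩
    · rw [prec_inr, enc_subset] at hp
      obtain rfl := Option.some.inj hp.2
      rw [res_inr] at he hg
      cases π with
      | nil => exact ⟨trivial, ((enc_subset _ _ _ _).1 hg).1, q'.2⟩
      | cons c π =>
        exfalso
        have hc := he.1
        rcases c with ⟨a, r⟩ | r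
        · rw [prec_inl, enc_subset] at hc
          simp at hc
        · rw [prec_inr, enc_subset] at hc
          simp at hc

theorem forward {F A Q : Type} (M : Strips F A) (d : DFA A Q) (w : List A) :
    ∀ (S : Set F) (q : Q), M.exec w S → M.G ⊆ M.finalState w S → d.evalFrom q w ∈ d.accept →
    ∃ π : List ((A × Q) ⊕ {q : Q // q ∈ d.accept}),
      (compiled M d).exec π (enc S (some q)) ∧
      enc M.G none ⊆ (compiled M d).finalState π (enc S (some q)) ∧
      π.filterMap (erase _) = w := by
  induction w with
  | nil =>
    intro S q _ hg ha
    refine ⟨[Sum.inr ⟨q, ha⟩], ⟨?_, trivial⟩, ?_, rfl⟩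
    · rw [prec_inr, enc_subset]
      exact ⟨Set.empty_subset _, rfl⟩
    · change _ ⊆ (compiled M d).res (Sum.inr ⟨q, ha⟩) _
      rw [res_inr M d ⟨q, ha⟩, enc_subset]
      exact ⟨hg, rfl⟩
  | cons a w ih =>
    intro S q he hg ha
    obtain ⟨π, h1, h2, h3⟩ := ih (M.res a S) (d.step q a) he.2 hg ha
    refine ⟨Sum.inl (a, q) :: π, ⟨?_, ?_⟩, ?_, ?_⟩
    · rw [prec_inl, enc_subset]
      exact ⟨he.1, rfl⟩
    · rw [res_inl]
      exact h1
    · change _ ⊆ (compiled M d).finalState π ((compiled M d).res _ _)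
      rw [res_inl]
      exact h2
    · simp [erase, ← h3]

theorem stmt15 {F A : Type} (M : Strips F A) {Q : Type} [Fintype Q] (d : DFA A Q) :
    ∃ (F' A' : Type) (M' : Strips F' A') (h : A' → Option A),
      (fun π => π.filterMap h) '' M'.Plans = M.Plans ∩ (d.accepts : Set (List A)) := by
  refine ⟨_, _, compiled M d, erase _, ?_⟩
  ext w
  constructor
  · rintro ⟨π, ⟨he, hg⟩, rfl⟩
    obtain ⟨h1, h2, h3⟩ := backward M d π M.I d.start he hg
    exact ⟨⟨h1, h2⟩, h3⟩
  · rintro ⟨⟨he, hg⟩, ha⟩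
    obtain ⟨π, h1, h2, h3⟩ := forward M d w M.I d.start he hg ha
    exact ⟨π, ⟨h1, h2⟩, h3⟩
end
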